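/- For every p ≥ 1 there exists a constant C > 0, depending only on p and the model parameters (B, β₁, β₂, ρ, θ, σ, γ, R), such that for every (k₀,h₀) ∈ (0,∞)², every admissible control c ∈ 𝓐(k₀,h₀), and every t ≥ 0: E[ |(k_t, h_t)|^p ] ≤ C·(1 + t^{p−1/2})·|(k₀,h₀)|^p·exp{ p·( B + ((2p−1)·β₁² + 4p·β₂²)/2 )·t }, where |·| denotes the Euclidean norm on ℝ² and (k,h) is the state pair associated with c starting from (k₀,h₀). -/

import Mathlib

open MeasureTheory ProbabilityTheory Real Set Matrix
open scoped ENNReal NNReal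

noncomputable section

namespace HabitModel

/-- A standard Brownian motion with respect to the filtration `F`: adapted, with continuous
paths started at `0`, whose increments are independent of the past and Gaussian. -/
structure IsStdBM {Ω : Type*} {mΩ : MeasurableSpace Ω} (P : Measure Ω)
    (F : Filtration ℝ mΩ) (W : ℝ → Ω → ℝ) : Prop where
  adapted : Adapted F W
  cont : ∀ ω, Continuous fun t => W t ω
  init : ∀ ω, W 0 ω = 0
  indep_incr : ∀ s t : ℝ, 0 ≤ s → s ≤ t →
    Indep (MeasurableSpace.comap (fun ω => W t ω - W s ω) inferInstance) (F s) P
  gauss_incr : ∀ s t : ℝ, 0 ≤ s → s ≤ t →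
    P.map (fun ω => W t ω - W s ω) = gaussianReal 0 (Real.toNNReal (t - s))

/-- The stochastic setting of the model: a filtered probability space carrying two
independent standard Brownian motions, together with the model parameters. -/
structure Setting (Ω : Type*) [mΩ : MeasurableSpace Ω] where
  P : Measure Ω
  isProb : IsProbabilityMeasure P
  F : Filtration ℝ mΩ
  W1 : ℝ → Ω → ℝ
  W2 : ℝ → Ω → ℝ
  bm1 : IsStdBM P F W1
  bm2 : IsStdBM P F W2
  indepW : Indep (⨆ t : ℝ, MeasurableSpace.comap (W1 t) inferInstance)
      (⨆ t : ℝ, MeasurableSpace.comap (W2 t) inferInstance) P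
  B : ℝ
  β₁ : ℝ
  β₂ : ℝ
  ρ : ℝ
  θ : ℝ
  σ : ℝ
  γ : ℝ
  R : ℝ
  hB : 0 ≤ B
  hβ₁ : 0 < β₁
  hβ₂ : 0 < β₂
  hρ₀ : 0 < ρ
  hρ₁ : ρ < 1
  hθ : 0 < θ
  hσ : 1 < σ
  hγ₀ : 0 ≤ γ
  hγ₁ : γ < 1
  hR : 0 < R

variable {Ω : Type*} [mΩ : MeasurableSpace Ω]

/-- Pathwise-explicit solution of `dk_t = (B k_t - c_t) dt + β₁ k_t dW¹_t`, `k_0 = k₀`. -/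
def kProc (S : Setting Ω) (k₀ : ℝ) (c : ℝ → Ω → ℝ) (t : ℝ) (ω : Ω) : ℝ :=
  Real.exp ((S.B - S.β₁ ^ 2 / 2) * t + S.β₁ * S.W1 t ω) *
    (k₀ - ∫ s in (0:ℝ)..t, c s ω * Real.exp (-((S.B - S.β₁ ^ 2 / 2) * s) - S.β₁ * S.W1 s ω))

/-- Pathwise-explicit solution of `dh_t = ρ (c_t - h_t) dt + β₂ h_t dW²_t`, `h_0 = h₀`. -/
def hProc (S : Setting Ω) (h₀ : ℝ) (c : ℝ → Ω → ℝ) (t : ℝ) (ω : Ω) : ℝ :=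
  Real.exp ((-S.ρ - S.β₂ ^ 2 / 2) * t + S.β₂ * S.W2 t ω) *
    (h₀ + S.ρ * ∫ s in (0:ℝ)..t, c s ω * Real.exp ((S.ρ + S.β₂ ^ 2 / 2) * s - S.β₂ * S.W2 s ω))

/-- Admissibility of a control `c` for the initial condition `(k₀, h₀)`: progressively
measurable, a.s. locally integrable trajectories, `c > 0` ℙ⊗dt-a.e., positive state
processes, and `c ≤ R·k` ℙ⊗dt-a.e. -/
structure IsAdmissible (S : Setting Ω) (k₀ h₀ : ℝ) (c : ℝ → Ω → ℝ) : Prop where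
  prog : ProgMeasurable S.F c
  locInt : ∀ᵐ ω ∂S.P, ∀ t : ℝ, 0 ≤ t → IntervalIntegrable (fun s => c s ω) volume 0 t
  cpos : ∀ᵐ ω ∂S.P, ∀ᵐ t ∂(volume.restrict (Set.Ici (0:ℝ))), 0 < c t ω
  kpos : ∀ᵐ ω ∂S.P, ∀ t : ℝ, 0 ≤ t → 0 < kProc S k₀ c t ω
  hpos : ∀ᵐ ω ∂S.P, ∀ t : ℝ, 0 ≤ t → 0 < hProc S h₀ c t ω
  cbdd : ∀ᵐ ω ∂S.P, ∀ᵐ t ∂(volume.restrict (Set.Ici (0:ℝ))), c t ω ≤ S.R * kProc S k₀ c t ω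

/-- The (nonnegative) cost `-J(k₀,h₀;c) ∈ [0,∞]`; note that
`(1/(1-σ))·(c/h^γ)^(1-σ) = -(1/(σ-1))·(h^γ/c)^(σ-1)`. -/
def Jcost (S : Setting Ω) (k₀ h₀ : ℝ) (c : ℝ → Ω → ℝ) : ℝ≥0∞ :=
  ∫⁻ ω, (∫⁻ t in Set.Ioi (0:ℝ),
    ENNReal.ofReal ((S.σ - 1)⁻¹ * ((hProc S h₀ c t ω) ^ S.γ / c t ω) ^ (S.σ - 1) *
      Real.exp (-S.θ * t))) ∂S.P

/-- The utility functional `J(k₀,h₀;c) ∈ [-∞,0]`. -/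
def J (S : Setting Ω) (k₀ h₀ : ℝ) (c : ℝ → Ω → ℝ) : EReal := -(Jcost S k₀ h₀ c : EReal)

/-- The infimum of the costs `-J(k₀,h₀;c)` over admissible controls. -/
def Vcost (S : Setting Ω) (k₀ h₀ : ℝ) : ℝ≥0∞ :=
  ⨅ c : {c : ℝ → Ω → ℝ // IsAdmissible S k₀ h₀ c}, Jcost S k₀ h₀ c.1

/-- The value function `V(k₀,h₀) = sup_{c ∈ 𝓐(k₀,h₀)} J(k₀,h₀;c) ∈ [-∞,0]`
(the supremum of `J = -Jcost` equals minus the infimum of the costs). -/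
def V (S : Setting Ω) (k₀ h₀ : ℝ) : EReal := -(Vcost S k₀ h₀ : EReal)

/-- Assumption 1 on the model parameters (with `λ = max{2, 1/(γ(σ-1))}`; it forces `γ > 0`). -/
def Assumption1 (S : Setting Ω) : Prop :=
  S.B ≤ S.R ∧ 0 < S.γ ∧
    (S.ρ + (S.β₂ ^ 2 - S.β₁ ^ 2) / 2 ≤ 0 →
      (S.σ - 1) * (-S.γ * S.ρ - (S.γ * S.β₂ ^ 2 - S.β₁ ^ 2) / 2 +
        max 2 (1 / (S.γ * (S.σ - 1))) * (S.σ - 1) * (S.β₁ ^ 2 + S.γ ^ 2 * S.β₂ ^ 2)) < S.θ) ∧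
    (0 < S.ρ + (S.β₂ ^ 2 - S.β₁ ^ 2) / 2 →
      (S.σ - 1) * (S.β₁ ^ 2 * (1 - S.γ) / 2 +
        max 2 (1 / (S.γ * (S.σ - 1))) * (S.σ - 1) * (S.β₁ ^ 2 + S.γ ^ 2 * S.β₂ ^ 2)) < S.θ)

/-! Follow a unit of capital that is consumed at time `s ∈ [0, t]` and thereby turned into habit:
at time `t` it has become `Y_s`, a geometric Brownian factor driven by `W¹` on `[0, s]` times one
driven by `W²` on `[s, t]`. Since `0 ≤ c ≤ R k` and consumption only lowers `k`, variation of
constants gives `k_t + h_t ≤ ∫ Y_s μ(ds)` for `μ = k₀ δ_t + h₀ δ_0 + ρ R k₀ ds` on `[0, t]`.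
The increments of `W²` after `s` are independent of `𝓕_s`, so `E[Y_s ^ p]` factors and is at most
`exp (r t)`, where `r` is the larger of the two moment rates; Jensen's inequality for `μ` then
yields `E[(k_t + h_t) ^ p] ≤ (k₀ + h₀ + ρ R k₀ t) ^ p exp (r t)`. Any exponential rate above `r`
absorbs the polynomial in `t`. -/

section Paths

variable {a b x₀ s t : ℝ} {w u v : ℝ → ℝ}

/-- The factor by which a geometric Brownian motion with drift `a`, volatility `b` and driving
path `w` grows from time `s` to time `t`. -/
def growthFactor (a b : ℝ) (w : ℝ → ℝ) (s t : ℝ) : ℝ :=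
  exp ((a - b ^ 2 / 2) * (t - s) + b * (w t - w s))

/-- The solution of `dx = (a x + u) dt + b x dw`, `x_0 = x₀`, written by variation of constants. -/
def linearSol (a b : ℝ) (w : ℝ → ℝ) (x₀ : ℝ) (u : ℝ → ℝ) (t : ℝ) : ℝ :=
  x₀ * growthFactor a b w 0 t + ∫ s in (0:ℝ)..t, u s * growthFactor a b w s t

lemma growthFactor_pos : 0 < growthFactor a b w s t := exp_pos _

@[simp] lemma growthFactor_self : growthFactor a b w t t = 1 := by simp [growthFactor]

lemma growthFactor_eq_mul :
    growthFactor a b w s t =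
      exp ((a - b ^ 2 / 2) * t + b * w t) * exp (-((a - b ^ 2 / 2) * s) - b * w s) := by
  rw [growthFactor, ← exp_add]
  ring_nf

lemma growthFactor_rpow (p : ℝ) :
    growthFactor a b w s t ^ p =
      exp (p * (a - b ^ 2 / 2) * (t - s)) * exp (p * b * (w t - w s)) := by
  rw [growthFactor, ← exp_mul, ← exp_add]
  ring_nf

lemma continuous_growthFactor_left (hw : Continuous w) :
    Continuous fun s => growthFactor a b w s t := by
  unfold growthFactor
  fun_prop

lemma continuous_growthFactor_right (hw : Continuous w) : Continuous (growthFactor a b w s) := by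
  unfold growthFactor
  fun_prop

lemma linearSol_eq_exp_mul (hw₀ : w 0 = 0) :
    linearSol a b w x₀ u t = exp ((a - b ^ 2 / 2) * t + b * w t) *
      (x₀ + ∫ s in (0:ℝ)..t, u s * exp (-((a - b ^ 2 / 2) * s) - b * w s)) := by
  simp only [linearSol, growthFactor_eq_mul, mul_left_comm (u _),
    intervalIntegral.integral_const_mul, hw₀, mul_zero, neg_zero, sub_zero, exp_zero, mul_one]
  ring

lemma linearSol_le_of_nonpos (ht : 0 ≤ t) (hu : ∀ᵐ s ∂volume.restrict (Ioc 0 t), u s ≤ 0) :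
    linearSol a b w x₀ u t ≤ x₀ * growthFactor a b w 0 t := by
  rw [linearSol, intervalIntegral.integral_of_le ht, add_le_iff_nonpos_right]
  refine integral_nonpos_of_ae ?_
  filter_upwards [hu] with s hs
  exact mul_nonpos_of_nonpos_of_nonneg hs growthFactor_pos.le

lemma linearSol_nonneg (ht : 0 ≤ t) (hx₀ : 0 ≤ x₀)
    (hu : ∀ᵐ s ∂volume.restrict (Ioc 0 t), 0 ≤ u s) : 0 ≤ linearSol a b w x₀ u t := by
  rw [linearSol, intervalIntegral.integral_of_le ht]
  refine add_nonneg (mul_nonneg hx₀ growthFactor_pos.le) (integral_nonneg_of_ae ?_)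
  filter_upwards [hu] with s hs
  exact mul_nonneg hs growthFactor_pos.le

lemma linearSol_le_linearSol (ht : 0 ≤ t) (hw : Continuous w) (hv : IntervalIntegrable v volume 0 t)
    (hu : ∀ᵐ s ∂volume.restrict (Ioc 0 t), 0 ≤ u s)
    (huv : ∀ᵐ s ∂volume.restrict (Ioc 0 t), u s ≤ v s) :
    linearSol a b w x₀ u t ≤ linearSol a b w x₀ v t := by
  simp only [linearSol, intervalIntegral.integral_of_le ht]
  refine add_le_add_right (integral_mono_of_nonneg ?_ ?_ ?_) _
  · filter_upwards [hu] with s hs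
    exact mul_nonneg hs growthFactor_pos.le
  · exact (hv.mul_continuousOn (continuous_growthFactor_left hw).continuousOn).1
  · filter_upwards [huv] with s hs
    exact mul_le_mul_of_nonneg_right hs growthFactor_pos.le

end Paths

section Switching

variable {a₁ b₁ a₂ b₂ R k₀ h₀ q ρ t : ℝ} {w₁ w₂ c : ℝ → ℝ}

/-- The growth up to time `t` of a unit of capital that follows the first geometric Brownian
motion until time `s` and the second one afterwards. -/
def switchedGrowth (a₁ b₁ : ℝ) (w₁ : ℝ → ℝ) (a₂ b₂ : ℝ) (w₂ : ℝ → ℝ) (t s : ℝ) : ℝ :=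
  growthFactor a₁ b₁ w₁ 0 s * growthFactor a₂ b₂ w₂ s t

/-- The distribution of the switching times `s` in the upper bound for `k_t + h_t`: initial capital
that is never consumed (`s = t`), initial habit (`s = 0`), and consumption at rate at most `q` in
between. -/
def switchingMeasure (k₀ h₀ q t : ℝ) : Measure ℝ :=
  ENNReal.ofReal k₀ • Measure.dirac t + ENNReal.ofReal h₀ • Measure.dirac 0 +
    ENNReal.ofReal q • volume.restrict (Ioc 0 t)

instance : SFinite (switchingMeasure k₀ h₀ q t) := by
  unfold switchingMeasure
  infer_instance

lemma switchedGrowth_pos {s : ℝ} : 0 < switchedGrowth a₁ b₁ w₁ a₂ b₂ w₂ t s :=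
  mul_pos growthFactor_pos growthFactor_pos

lemma continuous_switchedGrowth (hw₁ : Continuous w₁) (hw₂ : Continuous w₂) :
    Continuous (switchedGrowth a₁ b₁ w₁ a₂ b₂ w₂ t) :=
  (continuous_growthFactor_right hw₁).mul (continuous_growthFactor_left hw₂)

lemma switchingMeasure_univ (hk₀ : 0 ≤ k₀) (hh₀ : 0 ≤ h₀) (hq : 0 ≤ q) (ht : 0 ≤ t) :
    switchingMeasure k₀ h₀ q t univ = ENNReal.ofReal (k₀ + h₀ + q * t) := by
  rw [ENNReal.ofReal_add (by positivity) (by positivity), ENNReal.ofReal_add hk₀ hh₀,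
    ENNReal.ofReal_mul hq]
  simp [switchingMeasure]

lemma ae_mem_Icc_switchingMeasure (ht : 0 ≤ t) :
    ∀ᵐ s ∂switchingMeasure k₀ h₀ q t, s ∈ Icc 0 t := by
  simp only [switchingMeasure, ae_add_measure_iff]
  refine ⟨⟨Measure.ae_smul_measure ?_ _, Measure.ae_smul_measure ?_ _⟩,
    Measure.ae_smul_measure ?_ _⟩
  · simp [ae_dirac_eq, ht]
  · simp [ae_dirac_eq, ht]
  · filter_upwards [ae_restrict_mem measurableSet_Ioc] with s hs
    exact Ioc_subset_Icc_self hs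

lemma lintegral_switchingMeasure {f : ℝ → ℝ} (hf : Continuous f) (hf₀ : ∀ s, 0 ≤ f s)
    (hk₀ : 0 ≤ k₀) (hh₀ : 0 ≤ h₀) (hq : 0 ≤ q) (ht : 0 ≤ t) :
    ∫⁻ s, ENNReal.ofReal (f s) ∂switchingMeasure k₀ h₀ q t =
      ENNReal.ofReal (k₀ * f t + h₀ * f 0 + q * ∫ s in (0:ℝ)..t, f s) := by
  have hint : 0 ≤ ∫ s in (0:ℝ)..t, f s := intervalIntegral.integral_nonneg ht fun s _ => hf₀ s
  have hft := hf₀ t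
  have hf0 := hf₀ 0
  rw [ENNReal.ofReal_add (by positivity) (by positivity),
    ENNReal.ofReal_add (by positivity) (by positivity), ENNReal.ofReal_mul hk₀,
    ENNReal.ofReal_mul hh₀, ENNReal.ofReal_mul hq, intervalIntegral.integral_of_le ht,
    ofReal_integral_eq_lintegral_ofReal (hf.intervalIntegrable 0 t).1 (ae_of_all _ hf₀)]
  simp only [switchingMeasure, lintegral_add_measure, lintegral_smul_measure, smul_eq_mul,
    lintegral_dirac' _ hf.measurable.ennreal_ofReal]

lemma habit_le_switchedGrowth (ht : 0 ≤ t) (hρ : 0 ≤ ρ) (hR : 0 ≤ R)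
    (hw₁ : Continuous w₁) (hw₂ : Continuous w₂)
    (hc : ∀ᵐ s ∂volume.restrict (Ioc 0 t), 0 ≤ c s)
    (hcR : ∀ᵐ s ∂volume.restrict (Ioc 0 t),
      c s ≤ R * linearSol a₁ b₁ w₁ k₀ (fun r => -c r) s) :
    linearSol a₂ b₂ w₂ h₀ (fun s => ρ * c s) t ≤
      h₀ * switchedGrowth a₁ b₁ w₁ a₂ b₂ w₂ t 0 +
        ρ * R * k₀ * ∫ s in (0:ℝ)..t, switchedGrowth a₁ b₁ w₁ a₂ b₂ w₂ t s := by
  have hcap : ∀ s ∈ Ioc 0 t,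
      linearSol a₁ b₁ w₁ k₀ (fun r => -c r) s ≤ k₀ * growthFactor a₁ b₁ w₁ 0 s := by
    intro s hs
    refine linearSol_le_of_nonpos hs.1.le ?_
    filter_upwards [ae_restrict_of_ae_restrict_of_subset (Ioc_subset_Ioc_right hs.2) hc] with r hr
    exact neg_nonpos.2 hr
  calc linearSol a₂ b₂ w₂ h₀ (fun s => ρ * c s) t
      ≤ linearSol a₂ b₂ w₂ h₀ (fun s => ρ * (R * (k₀ * growthFactor a₁ b₁ w₁ 0 s))) t := by
        have hg : Continuous (growthFactor a₁ b₁ w₁ 0) := continuous_growthFactor_right hw₁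
        have hv : Continuous fun s => ρ * (R * (k₀ * growthFactor a₁ b₁ w₁ 0 s)) := by fun_prop
        refine linearSol_le_linearSol ht hw₂ (hv.intervalIntegrable 0 t) ?_ ?_
        · filter_upwards [hc] with s hs using mul_nonneg hρ hs
        · filter_upwards [hcR, ae_restrict_mem measurableSet_Ioc] with s hs hst
          exact mul_le_mul_of_nonneg_left
            (hs.trans (mul_le_mul_of_nonneg_left (hcap s hst) hR)) hρ
    _ = _ := by
        simp only [linearSol, switchedGrowth, growthFactor_self, one_mul,
          ← intervalIntegral.integral_const_mul, mul_assoc]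

lemma ofReal_sqrt_state_le_lintegral (ht : 0 ≤ t) (hρ : 0 ≤ ρ) (hR : 0 ≤ R)
    (hk₀ : 0 ≤ k₀) (hh₀ : 0 ≤ h₀) (hw₁ : Continuous w₁) (hw₂ : Continuous w₂)
    (hk : 0 ≤ linearSol a₁ b₁ w₁ k₀ (fun s => -c s) t)
    (hc : ∀ᵐ s ∂volume.restrict (Ioc 0 t), 0 ≤ c s)
    (hcR : ∀ᵐ s ∂volume.restrict (Ioc 0 t),
      c s ≤ R * linearSol a₁ b₁ w₁ k₀ (fun r => -c r) s) :
    ENNReal.ofReal (√(linearSol a₁ b₁ w₁ k₀ (fun s => -c s) t ^ 2 +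
        linearSol a₂ b₂ w₂ h₀ (fun s => ρ * c s) t ^ 2)) ≤
      ∫⁻ s, ENNReal.ofReal (switchedGrowth a₁ b₁ w₁ a₂ b₂ w₂ t s)
        ∂switchingMeasure k₀ h₀ (ρ * R * k₀) t := by
  have hcap : linearSol a₁ b₁ w₁ k₀ (fun s => -c s) t ≤
      k₀ * switchedGrowth a₁ b₁ w₁ a₂ b₂ w₂ t t := by
    rw [switchedGrowth, growthFactor_self, mul_one]
    refine linearSol_le_of_nonpos ht ?_
    filter_upwards [hc] with s hs using neg_nonpos.2 hs
  have hhab := habit_le_switchedGrowth (h₀ := h₀) (a₂ := a₂) (b₂ := b₂) ht hρ hR hw₁ hw₂ hc hcR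
  have hh : 0 ≤ linearSol a₂ b₂ w₂ h₀ (fun s => ρ * c s) t := by
    refine linearSol_nonneg ht hh₀ ?_
    filter_upwards [hc] with s hs using mul_nonneg hρ hs
  rw [lintegral_switchingMeasure (continuous_switchedGrowth hw₁ hw₂)
    (fun s => switchedGrowth_pos.le) hk₀ hh₀ (by positivity) ht]
  refine ENNReal.ofReal_le_ofReal ((sqrt_le_iff.2 ⟨add_nonneg hk hh, ?_⟩).trans ?_)
  · nlinarith [mul_nonneg hk hh]
  · linarith

end Switching

section Jensen

variable {α : Type*} [MeasurableSpace α] {p : ℝ}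

lemma rpow_lintegral_le {μ : Measure α} {f : α → ℝ≥0∞} (hf : AEMeasurable f μ) (hp : 1 ≤ p) :
    (∫⁻ x, f x ∂μ) ^ p ≤ μ univ ^ (p - 1) * ∫⁻ x, f x ^ p ∂μ := by
  have hp₀ : 0 < p := one_pos.trans_le hp
  have h := ENNReal.rpow_le_rpow
    (eLpNorm'_le_eLpNorm'_mul_rpow_measure_univ one_pos hp hf.aestronglyMeasurable) hp₀.le
  simp only [eLpNorm', enorm_eq_self, ENNReal.rpow_one, one_div, inv_one] at h
  rwa [ENNReal.mul_rpow_of_nonneg _ _ hp₀.le, ENNReal.rpow_inv_rpow hp₀.ne', ← ENNReal.rpow_mul,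
    sub_mul, one_mul, inv_mul_cancel₀ hp₀.ne', mul_comm] at h

lemma lintegral_rpow_lintegral_le {P : Measure Ω} [SFinite P] {μ : Measure α} [SFinite μ]
    {Y : α → Ω → ℝ≥0∞} {K : ℝ≥0∞} (hY : Measurable (Function.uncurry Y)) (hp : 1 ≤ p)
    (hK : ∀ᵐ x ∂μ, ∫⁻ ω, Y x ω ^ p ∂P ≤ K) :
    ∫⁻ ω, (∫⁻ x, Y x ω ∂μ) ^ p ∂P ≤ μ univ ^ p * K := by
  have hYp : Measurable (Function.uncurry fun ω x => Y x ω ^ p) :=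
    (hY.comp measurable_swap).pow_const p
  calc ∫⁻ ω, (∫⁻ x, Y x ω ∂μ) ^ p ∂P
      ≤ ∫⁻ ω, μ univ ^ (p - 1) * ∫⁻ x, Y x ω ^ p ∂μ ∂P :=
        lintegral_mono fun ω =>
          rpow_lintegral_le (hY.comp measurable_prodMk_right).aemeasurable hp
    _ = μ univ ^ (p - 1) * ∫⁻ x, ∫⁻ ω, Y x ω ^ p ∂P ∂μ := by
        rw [lintegral_const_mul _ hYp.lintegral_prod_right,
          lintegral_lintegral_swap hYp.aemeasurable]
    _ ≤ μ univ ^ (p - 1) * (K * μ univ) := by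
        rw [← lintegral_const]
        exact mul_le_mul_right (lintegral_mono_ae hK) _
    _ = μ univ ^ p * K := by
        have hpow : μ univ ^ p = μ univ ^ (p - 1) * μ univ := by
          simpa using ENNReal.rpow_add_of_nonneg (x := μ univ) _ _ (sub_nonneg.2 hp) zero_le_one
        rw [hpow, mul_left_comm, mul_comm K]

end Jensen

section Moments

/-- The exponential growth rate of the `p`-th moment of a geometric Brownian motion with drift `a`
and volatility `b`. -/
def momentRate (p a b : ℝ) : ℝ := p * a + p * (p - 1) / 2 * b ^ 2

lemma lintegral_ofReal_exp_mul_gaussianReal (m : ℝ) (v : ℝ≥0) (b : ℝ) :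
    ∫⁻ x, ENNReal.ofReal (exp (b * x)) ∂gaussianReal m v =
      ENNReal.ofReal (exp (m * b + v * b ^ 2 / 2)) := by
  rw [← ofReal_integral_eq_lintegral_ofReal (integrable_exp_mul_gaussianReal b)
    (ae_of_all _ fun x => (exp_pos _).le)]
  exact congrArg ENNReal.ofReal (congrFun mgf_id_gaussianReal b)

variable {P : Measure Ω} {F : Filtration ℝ mΩ} {W W₁ W₂ : ℝ → Ω → ℝ} {s t p : ℝ}

namespace IsStdBM

lemma isProbabilityMeasure (hW : IsStdBM P F W) : IsProbabilityMeasure P := by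
  have : IsProbabilityMeasure (P.map fun ω => W 0 ω - W 0 ω) := by
    rw [hW.gauss_incr 0 0 le_rfl le_rfl]
    infer_instance
  exact Measure.isProbabilityMeasure_of_map fun ω => W 0 ω - W 0 ω

lemma measurable (hW : IsStdBM P F W) (t : ℝ) : Measurable (W t) :=
  (hW.adapted t).mono (F.le t) le_rfl

lemma measurable_growthFactor (hW : IsStdBM P F W) (a b s t : ℝ) :
    Measurable fun ω => growthFactor a b (W · ω) s t := by
  have := hW.measurable s
  have := hW.measurable t
  unfold growthFactor
  fun_prop

lemma measurable_filtration_growthFactor (hW : IsStdBM P F W) (a b : ℝ) (hst : s ≤ t) :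
    Measurable[F t] fun ω => growthFactor a b (W · ω) s t := by
  have hs : Measurable[F t] (W s) := (hW.adapted s).mono (F.mono hst) le_rfl
  have ht : Measurable[F t] (W t) := hW.adapted t
  exact (measurable_const.add ((ht.sub hs).const_mul b)).exp

lemma lintegral_growthFactor_rpow (hW : IsStdBM P F W) (p a b : ℝ) (hs : 0 ≤ s) (hst : s ≤ t) :
    ∫⁻ ω, ENNReal.ofReal (growthFactor a b (W · ω) s t ^ p) ∂P =
      ENNReal.ofReal (exp (momentRate p a b * (t - s))) := by
  have hincr : ∫⁻ ω, ENNReal.ofReal (exp (p * b * (W t ω - W s ω))) ∂P =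
      ENNReal.ofReal (exp ((t - s) * (p * b) ^ 2 / 2)) := by
    rw [← lintegral_map (f := fun x => ENNReal.ofReal (exp (p * b * x)))
        (g := fun ω => W t ω - W s ω) (by fun_prop) ((hW.measurable t).sub (hW.measurable s)),
      hW.gauss_incr s t hs hst, lintegral_ofReal_exp_mul_gaussianReal,
      coe_toNNReal _ (sub_nonneg.2 hst), zero_mul, zero_add]
  simp only [growthFactor_rpow, ENNReal.ofReal_mul (exp_pos _).le]
  rw [lintegral_const_mul' _ _ ENNReal.ofReal_ne_top, hincr, ← ENNReal.ofReal_mul (exp_pos _).le,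
    ← exp_add, momentRate]
  ring_nf

lemma measurable_uncurry_switchedGrowth (hW₁ : IsStdBM P F W₁) (hW₂ : IsStdBM P F W₂)
    (a₁ b₁ a₂ b₂ t : ℝ) :
    Measurable (Function.uncurry fun s ω => switchedGrowth a₁ b₁ (W₁ · ω) a₂ b₂ (W₂ · ω) t s) :=
  measurable_uncurry_of_continuous_of_measurable
    (fun ω => continuous_switchedGrowth (hW₁.cont ω) (hW₂.cont ω))
    (fun s => (hW₁.measurable_growthFactor a₁ b₁ 0 s).mul (hW₂.measurable_growthFactor a₂ b₂ s t))

lemma lintegral_switchedGrowth_rpow (hW₁ : IsStdBM P F W₁) (hW₂ : IsStdBM P F W₂)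
    (p a₁ b₁ a₂ b₂ : ℝ) (hs : 0 ≤ s) (hst : s ≤ t) :
    ∫⁻ ω, ENNReal.ofReal (switchedGrowth a₁ b₁ (W₁ · ω) a₂ b₂ (W₂ · ω) t s ^ p) ∂P =
      ENNReal.ofReal (exp (momentRate p a₁ b₁ * s + momentRate p a₂ b₂ * (t - s))) := by
  have hpast : Measurable[F s] fun ω => ENNReal.ofReal (growthFactor a₁ b₁ (W₁ · ω) 0 s ^ p) :=
    ((hW₁.measurable_filtration_growthFactor a₁ b₁ hs).pow_const p).ennreal_ofReal
  have hfuture : Measurable[MeasurableSpace.comap (fun ω => W₂ t ω - W₂ s ω) inferInstance]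
      fun ω => ENNReal.ofReal (growthFactor a₂ b₂ (W₂ · ω) s t ^ p) :=
    (((measurable_const.add ((comap_measurable _).const_mul b₂)).exp).pow_const p).ennreal_ofReal
  simp only [switchedGrowth, mul_rpow growthFactor_pos.le growthFactor_pos.le,
    ENNReal.ofReal_mul (rpow_nonneg growthFactor_pos.le p)]
  rw [lintegral_mul_eq_lintegral_mul_lintegral_of_independent_measurableSpace (F.le s)
      ((hW₂.measurable t).sub (hW₂.measurable s)).comap_le (hW₂.indep_incr s t hs hst).symm
      hpast hfuture,
    hW₁.lintegral_growthFactor_rpow p a₁ b₁ le_rfl hs,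
    hW₂.lintegral_growthFactor_rpow p a₂ b₂ hs hst, sub_zero,
    ← ENNReal.ofReal_mul (exp_pos _).le, ← exp_add]

lemma lintegral_rpow_lintegral_switchedGrowth_le (hW₁ : IsStdBM P F W₁) (hW₂ : IsStdBM P F W₂)
    {a₁ b₁ a₂ b₂ r k₀ h₀ q : ℝ} (hp : 1 ≤ p) (hr₁ : momentRate p a₁ b₁ ≤ r)
    (hr₂ : momentRate p a₂ b₂ ≤ r) (hk₀ : 0 ≤ k₀) (hh₀ : 0 ≤ h₀) (hq : 0 ≤ q) (ht : 0 ≤ t) :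
    ∫⁻ ω, (∫⁻ s, ENNReal.ofReal (switchedGrowth a₁ b₁ (W₁ · ω) a₂ b₂ (W₂ · ω) t s)
        ∂switchingMeasure k₀ h₀ q t) ^ p ∂P ≤
      ENNReal.ofReal ((k₀ + h₀ + q * t) ^ p * exp (r * t)) := by
  have := hW₁.isProbabilityMeasure
  have hp₀ : 0 ≤ p := zero_le_one.trans hp
  rw [ENNReal.ofReal_mul (by positivity), ← ENNReal.ofReal_rpow_of_nonneg (by positivity) hp₀,
    ← switchingMeasure_univ hk₀ hh₀ hq ht]
  refine lintegral_rpow_lintegral_le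
    (hW₁.measurable_uncurry_switchedGrowth hW₂ a₁ b₁ a₂ b₂ t).ennreal_ofReal hp ?_
  filter_upwards [ae_mem_Icc_switchingMeasure ht] with s ⟨hs, hst⟩
  simp only [ENNReal.ofReal_rpow_of_nonneg switchedGrowth_pos.le hp₀]
  rw [hW₁.lintegral_switchedGrowth_rpow hW₂ p a₁ b₁ a₂ b₂ hs hst]
  refine ENNReal.ofReal_le_ofReal (exp_le_exp.2 ?_)
  linarith [mul_le_mul_of_nonneg_right hr₁ hs, mul_le_mul_of_nonneg_right hr₂ (sub_nonneg.2 hst)]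

end IsStdBM

end Moments

section StateMoments

/-- The constraints `0 ≤ c ≤ R k` and `0 ≤ k` on a progressively measurable, pathwise locally
integrable consumption rate `c`, where `k` stands for the capital process that `c` generates. -/
structure IsFeasible (P : Measure Ω) (F : Filtration ℝ mΩ) (R : ℝ) (k c : ℝ → Ω → ℝ) : Prop where
  prog : IsStronglyProgressive F c
  locInt : ∀ᵐ ω ∂P, ∀ t : ℝ, 0 ≤ t → IntervalIntegrable (fun s => c s ω) volume 0 t
  nonneg : ∀ᵐ ω ∂P, ∀ᵐ t ∂volume.restrict (Ici (0:ℝ)), 0 ≤ c t ω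
  le_mul : ∀ᵐ ω ∂P, ∀ᵐ t ∂volume.restrict (Ici (0:ℝ)), c t ω ≤ R * k t ω
  capital_nonneg : ∀ᵐ ω ∂P, ∀ t : ℝ, 0 ≤ t → 0 ≤ k t ω

variable {P : Measure Ω} {F : Filtration ℝ mΩ} {W₁ W₂ k h c : ℝ → Ω → ℝ}
  {a₁ b₁ a₂ b₂ ρ R p r k₀ h₀ t : ℝ}

lemma lintegral_sqrt_state_rpow_le (hW₁ : IsStdBM P F W₁) (hW₂ : IsStdBM P F W₂)
    (hk : ∀ t ω, k t ω = linearSol a₁ b₁ (W₁ · ω) k₀ (fun s => -c s ω) t)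
    (hh : ∀ t ω, h t ω = linearSol a₂ b₂ (W₂ · ω) h₀ (fun s => ρ * c s ω) t)
    (hc : IsFeasible P F R k c) (hρ : 0 ≤ ρ) (hR : 0 ≤ R) (hp : 1 ≤ p)
    (hr₁ : momentRate p a₁ b₁ ≤ r) (hr₂ : momentRate p a₂ b₂ ≤ r)
    (hk₀ : 0 ≤ k₀) (hh₀ : 0 ≤ h₀) (ht : 0 ≤ t) :
    ∫⁻ ω, ENNReal.ofReal (√(k t ω ^ 2 + h t ω ^ 2) ^ p) ∂P ≤
      ENNReal.ofReal ((k₀ + h₀ + ρ * R * k₀ * t) ^ p * exp (r * t)) := by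
  have hp₀ : 0 ≤ p := zero_le_one.trans hp
  have hsub : Ioc 0 t ⊆ Ici 0 := fun s hs => hs.1.le
  refine le_trans (lintegral_mono_ae ?_) (hW₁.lintegral_rpow_lintegral_switchedGrowth_le hW₂
    hp hr₁ hr₂ hk₀ hh₀ (by positivity) ht)
  filter_upwards [hc.nonneg, hc.le_mul, hc.capital_nonneg] with ω hω₀ hωR hωk
  rw [← ENNReal.ofReal_rpow_of_nonneg (sqrt_nonneg _) hp₀]
  refine ENNReal.rpow_le_rpow ?_ hp₀
  simp only [hk] at hωR hωk
  rw [hk, hh]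
  exact ofReal_sqrt_state_le_lintegral ht hρ hR hk₀ hh₀ (hW₁.cont ω) (hW₂.cont ω) (hωk t ht)
    (ae_restrict_of_ae_restrict_of_subset hsub hω₀) (ae_restrict_of_ae_restrict_of_subset hsub hωR)

lemma add_mul_le_mul_exp {x y δ : ℝ} (hx : 0 ≤ x) (hy : 0 ≤ y) (hδ : 0 < δ) (ht : 0 ≤ t) :
    x + y * t ≤ (x + y / δ) * exp (δ * t) := by
  calc x + y * t ≤ x + y * t + (y / δ + x * δ * t) := le_add_of_nonneg_right (by positivity)
    _ = (x + y / δ) * (δ * t + 1) := by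
        field_simp
        ring
    _ ≤ _ := mul_le_mul_of_nonneg_left (add_one_le_exp _) (by positivity)

lemma rpow_mul_exp_le {L q : ℝ} (hp : 0 < p) (hrL : r < L) (hq : 0 ≤ q)
    (hk₀ : 0 ≤ k₀) (hh₀ : 0 ≤ h₀) (ht : 0 ≤ t) :
    (k₀ + h₀ + q * k₀ * t) ^ p * exp (r * t) ≤
      (2 + q / ((L - r) / p)) ^ p * √(k₀ ^ 2 + h₀ ^ 2) ^ p * exp (L * t) := by
  set n := √(k₀ ^ 2 + h₀ ^ 2)
  have hn : 0 ≤ n := sqrt_nonneg _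
  have hk₀n : k₀ ≤ n := le_sqrt_of_sq_le (le_add_of_nonneg_right (sq_nonneg _))
  have hh₀n : h₀ ≤ n := le_sqrt_of_sq_le (le_add_of_nonneg_left (sq_nonneg _))
  have hδ : 0 < (L - r) / p := div_pos (sub_pos.2 hrL) hp
  have hbase : k₀ + h₀ + q * k₀ * t ≤ (2 + q / ((L - r) / p)) * n * exp ((L - r) / p * t) :=
    calc k₀ + h₀ + q * k₀ * t ≤ n + n + q * n * t := by gcongr
      _ = n * (2 + q * t) := by ring
      _ ≤ n * ((2 + q / ((L - r) / p)) * exp ((L - r) / p * t)) :=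
        mul_le_mul_of_nonneg_left (add_mul_le_mul_exp zero_le_two hq hδ ht) hn
      _ = _ := by ring
  calc (k₀ + h₀ + q * k₀ * t) ^ p * exp (r * t)
      ≤ ((2 + q / ((L - r) / p)) * n * exp ((L - r) / p * t)) ^ p * exp (r * t) :=
        mul_le_mul_of_nonneg_right (rpow_le_rpow (by positivity) hbase hp.le) (exp_pos _).le
    _ = _ := by
        rw [mul_rpow (by positivity) (exp_pos _).le, mul_rpow (by positivity) hn, ← exp_mul,
          mul_assoc, ← exp_add]
        congr 2
        field_simp
        ring

theorem state_moment_bound_general {L : ℝ} (hρ : 0 ≤ ρ) (hR : 0 ≤ R) (hp : 1 ≤ p)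
    (hL₁ : momentRate p a₁ b₁ < L) (hL₂ : momentRate p a₂ b₂ < L) :
    ∃ C > (0:ℝ), ∀ (P : Measure Ω) (F : Filtration ℝ mΩ) (W₁ W₂ : ℝ → Ω → ℝ),
      IsStdBM P F W₁ → IsStdBM P F W₂ → ∀ k₀ h₀ : ℝ, 0 ≤ k₀ → 0 ≤ h₀ → ∀ k h c : ℝ → Ω → ℝ,
        (∀ t ω, k t ω = linearSol a₁ b₁ (W₁ · ω) k₀ (fun s => -c s ω) t) →
        (∀ t ω, h t ω = linearSol a₂ b₂ (W₂ · ω) h₀ (fun s => ρ * c s ω) t) →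
        IsFeasible P F R k c → ∀ t : ℝ, 0 ≤ t →
          ∫⁻ ω, ENNReal.ofReal (√(k t ω ^ 2 + h t ω ^ 2) ^ p) ∂P ≤
            ENNReal.ofReal (C * √(k₀ ^ 2 + h₀ ^ 2) ^ p * exp (L * t)) := by
  set r := max (momentRate p a₁ b₁) (momentRate p a₂ b₂)
  have hrL : r < L := max_lt hL₁ hL₂
  have hp₀ : 0 < p := one_pos.trans_le hp
  have hδ : 0 < (L - r) / p := div_pos (sub_pos.2 hrL) hp₀
  refine ⟨(2 + ρ * R / ((L - r) / p)) ^ p,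
    rpow_pos_of_pos (add_pos_of_pos_of_nonneg two_pos (div_nonneg (mul_nonneg hρ hR) hδ.le)) p, ?_⟩
  intro P F W₁ W₂ hW₁ hW₂ k₀ h₀ hk₀ hh₀ k h c hk hh hc t ht
  exact (lintegral_sqrt_state_rpow_le hW₁ hW₂ hk hh hc hρ hR hp (le_max_left _ _)
    (le_max_right _ _) hk₀ hh₀ ht).trans
    (ENNReal.ofReal_le_ofReal (rpow_mul_exp_le hp₀ hrL (mul_nonneg hρ hR) hk₀ hh₀ ht))

end StateMoments

section Model

variable (S : Setting Ω) {p : ℝ}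

lemma kProc_eq_linearSol (k₀ : ℝ) (c : ℝ → Ω → ℝ) (t : ℝ) (ω : Ω) :
    kProc S k₀ c t ω = linearSol S.B S.β₁ (S.W1 · ω) k₀ (fun s => -c s ω) t := by
  rw [linearSol_eq_exp_mul (w := (S.W1 · ω)) (S.bm1.init ω), kProc]
  simp only [neg_mul, intervalIntegral.integral_neg, sub_eq_add_neg]

lemma hProc_eq_linearSol (h₀ : ℝ) (c : ℝ → Ω → ℝ) (t : ℝ) (ω : Ω) :
    hProc S h₀ c t ω = linearSol (-S.ρ) S.β₂ (S.W2 · ω) h₀ (fun s => S.ρ * c s ω) t := by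
  have hexp : S.ρ + S.β₂ ^ 2 / 2 = -(-S.ρ - S.β₂ ^ 2 / 2) := by ring
  rw [linearSol_eq_exp_mul (w := (S.W2 · ω)) (S.bm2.init ω), hProc]
  simp only [mul_assoc, intervalIntegral.integral_const_mul, hexp, neg_mul]

variable {S} in
lemma IsAdmissible.isFeasible {k₀ h₀ : ℝ} {c : ℝ → Ω → ℝ} (hc : IsAdmissible S k₀ h₀ c) :
    IsFeasible S.P S.F S.R (kProc S k₀ c) c where
  prog := hc.prog
  locInt := hc.locInt
  nonneg := hc.cpos.mono fun _ hω => hω.mono fun _ => le_of_lt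
  le_mul := hc.cbdd
  capital_nonneg := hc.kpos.mono fun _ hω t ht => (hω t ht).le

lemma momentRate_capital_lt (hp : 0 < p) :
    momentRate p S.B S.β₁ < p * (S.B + ((2 * p - 1) * S.β₁ ^ 2 + 4 * p * S.β₂ ^ 2) / 2) := by
  have hβ₁ := S.hβ₁
  have hgap : 0 < p ^ 2 / 2 * S.β₁ ^ 2 + 2 * p ^ 2 * S.β₂ ^ 2 := by positivity
  rw [momentRate]
  linarith

lemma momentRate_habit_lt (hp : 1 / 2 ≤ p) :
    momentRate p (-S.ρ) S.β₂ < p * (S.B + ((2 * p - 1) * S.β₁ ^ 2 + 4 * p * S.β₂ ^ 2) / 2) := by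
  have hB := S.hB
  have hρ := S.hρ₀
  have hp' : 0 ≤ 2 * p - 1 := by linarith
  have hgap : 0 < p * (S.B + S.ρ) + p * (2 * p - 1) / 2 * S.β₁ ^ 2 +
      (3 * p ^ 2 + p) / 2 * S.β₂ ^ 2 := by positivity
  rw [momentRate]
  linarith

end Model

/-- Moment estimate for the state pair: for every `p ≥ 1` there is `C > 0` (depending only
on `p` and the model parameters) such that for every initial condition, every admissible
control and every `t ≥ 0`,
`E[|(k_t,h_t)|^p] ≤ C(1+t^{p-1/2})|(k₀,h₀)|^p exp{p(B + ((2p-1)β₁² + 4pβ₂²)/2)t}`. -/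
theorem state_moment_bound (S : Setting Ω) (p : ℝ) (hp : 1 ≤ p) :
    ∃ C > (0:ℝ), ∀ k₀ h₀ : ℝ, 0 < k₀ → 0 < h₀ → ∀ c : ℝ → Ω → ℝ,
      IsAdmissible S k₀ h₀ c → ∀ t : ℝ, 0 ≤ t →
        (∫⁻ ω, ENNReal.ofReal
            ((Real.sqrt ((kProc S k₀ c t ω) ^ 2 + (hProc S h₀ c t ω) ^ 2)) ^ p) ∂S.P)
          ≤ ENNReal.ofReal (C * (1 + t ^ (p - 1 / 2)) * (Real.sqrt (k₀ ^ 2 + h₀ ^ 2)) ^ p *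
              Real.exp (p * (S.B + ((2 * p - 1) * S.β₁ ^ 2 + 4 * p * S.β₂ ^ 2) / 2) * t)) := by
  obtain ⟨C, hC, hbound⟩ := state_moment_bound_general (Ω := Ω) S.hρ₀.le S.hR.le hp
    (momentRate_capital_lt S (by linarith)) (momentRate_habit_lt S (by linarith))
  refine ⟨C, hC, fun k₀ h₀ hk₀ hh₀ c hc t ht => ?_⟩
  refine (hbound S.P S.F S.W1 S.W2 S.bm1 S.bm2 k₀ h₀ hk₀.le hh₀.le _ _ c
    (kProc_eq_linearSol S k₀ c) (hProc_eq_linearSol S h₀ c) hc.isFeasible t ht).trans ?_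
  gcongr
  exact le_mul_of_one_le_right hC.le (le_add_of_nonneg_right (rpow_nonneg ht _))

end HabitModel
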